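/- Define v : ℝ → ℝ by v(x) = exp(−(1−x²)^{−2}) for x ∈ (−1,1) and v(x) = 0 for |x| ≥ 1, and define ψ(y) = (π/2)(∫_ℝ v dx)^{−1} v(y), θ(x) = ∫_{−∞}^x ψ(y) dy, and s(x) = sin(θ(x)). Then s is in the Gevrey class G^{3/2}_0(1, C₂) with C₂ = (2 + 3√2)(1 + π/2); that is, ‖s^{(k)}‖_∞ ≤ ((2 + 3√2)(1 + π/2))^k (k!)^{3/2} for all integers k ≥ 0. -/

import Mathlib

open MeasureTheory

/-- The bump function `v(x) = exp(-(1-x²)^{-2})` on `(-1,1)`, zero elsewhere. -/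
noncomputable def vFun (x : ℝ) : ℝ :=
  if x ∈ Set.Ioo (-1 : ℝ) 1 then Real.exp (-((1 - x ^ 2) ^ 2)⁻¹) else 0

/-- The normalized cutoff `ψ = (π/2)(∫v)⁻¹ v`. -/
noncomputable def psiFun (y : ℝ) : ℝ :=
  (Real.pi / 2) * (∫ x : ℝ, vFun x)⁻¹ * vFun y

/-- `θ(x) = ∫_{-∞}^x ψ(y) dy`. -/
noncomputable def thetaFun (x : ℝ) : ℝ := ∫ y in Set.Iic x, psiFun y

/-- The modified Heaviside function `s(x) = sin(θ(x))`. -/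
noncomputable def sFun (x : ℝ) : ℝ := Real.sin (thetaFun x)

/-!
Around a point `x ∈ (-1, 1)` with `a = 1 - x²`, the derivative `s' = cos θ · ψ` extends
holomorphically to the disc of radius `a / 16`, and is bounded there by `16 exp(-a⁻² / 2)`.
Cauchy's estimates give `|s⁽ᵏ⁺¹⁾(x)| ≤ 16 · 16ᵏ k! a⁻ᵏ exp(-a⁻² / 2)`, and since
`uᵏ exp(-u² / 2) ≤ √k!` this is at most `16ᵏ⁺¹ (k!)^{3/2}`. Sacrificing two more powers of `a⁻¹`
in the same way shows that every derivative is `O(a²)` at `±1`, so the extension by zero is smooth.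
The theorem follows because `(2 + 3√2)(1 + π/2) ≈ 16.05` exceeds `16`.
-/

open Filter Metric
open scoped Real Topology

section Flat

variable {E : Type*} [NormedAddCommGroup E] [NormedSpace ℝ E]

theorem hasDerivAt_zero_of_norm_le_sq {g : ℝ → E} {ρ : ℝ → ℝ} {M c : ℝ}
    (hρ : DifferentiableAt ℝ ρ c) (hc : ρ c ≤ 0) (hg : ∀ x, ρ x ≤ 0 → g x = 0)
    (hM : ∀ x, 0 < ρ x → ‖g x‖ ≤ M * ρ x ^ 2) : HasDerivAt g 0 c := by
  have hg_le (x : ℝ) : ‖g x‖ ≤ |M| * ‖(ρ x - ρ c) ^ 2‖ := by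
    rcases le_or_gt (ρ x) 0 with hx | hx
    · simp only [hg x hx, norm_zero]
      positivity
    · rw [Real.norm_of_nonneg (sq_nonneg _)]
      calc ‖g x‖ ≤ M * ρ x ^ 2 := hM x hx
        _ ≤ |M| * (ρ x - ρ c) ^ 2 := by
          gcongr
          exacts [le_abs_self M, by linarith]
  have hg_isBigO : g =O[𝓝 c] fun x ↦ (x - c) ^ 2 :=
    (Asymptotics.IsBigO.of_bound |M| (.of_forall hg_le)).trans (hρ.isBigO_sub.pow 2)
  rw [hasDerivAt_iff_isLittleO]
  simpa only [hg c hc, sub_zero, smul_zero] using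
    hg_isBigO.norm_right.trans_isLittleO (by
      simpa only [norm_pow] using Asymptotics.isLittleO_pow_sub_sub c one_lt_two)

variable {f : ℝ → E} {ρ : ℝ → ℝ}

theorem iteratedDeriv_eq_zero_of_norm_le_sq (hρ : Differentiable ℝ ρ)
    (hf : ∀ x, ρ x ≤ 0 → f x = 0)
    (hbound : ∀ k, ∃ M, ∀ x, 0 < ρ x → ‖iteratedDeriv k f x‖ ≤ M * ρ x ^ 2) (k : ℕ) :
    ∀ x, ρ x ≤ 0 → iteratedDeriv k f x = 0 := by
  induction k with
  | zero => simpa only [iteratedDeriv_zero] using hf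
  | succ k ih =>
    intro x hx
    obtain ⟨M, hM⟩ := hbound k
    rw [iteratedDeriv_succ]
    exact (hasDerivAt_zero_of_norm_le_sq (hρ x) hx ih hM).deriv

theorem contDiff_of_norm_iteratedDeriv_le_sq (hρ : Differentiable ℝ ρ)
    (hf : ∀ x, ρ x ≤ 0 → f x = 0)
    (hdiff : ∀ k x, 0 < ρ x → DifferentiableAt ℝ (iteratedDeriv k f) x)
    (hbound : ∀ k, ∃ M, ∀ x, 0 < ρ x → ‖iteratedDeriv k f x‖ ≤ M * ρ x ^ 2) :
    ContDiff ℝ (⊤ : ℕ∞) f := by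
  refine contDiff_of_differentiable_iteratedDeriv fun k _ x ↦ ?_
  rcases le_or_gt (ρ x) 0 with hx | hx
  · obtain ⟨M, hM⟩ := hbound k
    exact (hasDerivAt_zero_of_norm_le_sq (hρ x) hx
      (iteratedDeriv_eq_zero_of_norm_le_sq hρ hf hbound k) hM).differentiableAt
  · exact hdiff k x hx

end Flat

section Complex

theorem norm_iteratedDeriv_le_of_forall_mem_ball_norm_le {E : Type*} [NormedAddCommGroup E]
    [NormedSpace ℂ E] [CompleteSpace E] {f : ℂ → E} {c : ℂ} {r B : ℝ} (n : ℕ) (hr : 0 < r)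
    (hf : DifferentiableOn ℂ f (ball c r)) (hB : ∀ z ∈ ball c r, ‖f z‖ ≤ B) :
    ‖iteratedDeriv n f c‖ ≤ n.factorial * B / r ^ n := by
  have hlim : Tendsto (fun s : ℝ ↦ n.factorial * B / s ^ n) (𝓝[<] r)
      (𝓝 (n.factorial * B / r ^ n)) :=
    ContinuousAt.continuousWithinAt (by fun_prop (disch := positivity))
  refine ge_of_tendsto hlim ?_
  filter_upwards [Ioo_mem_nhdsLT hr] with s hs
  have hsub : closedBall c s ⊆ ball c r := closedBall_subset_ball hs.2
  exact Complex.norm_iteratedDeriv_le_of_forall_mem_sphere_norm_le n hs.1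
    (hf.mono (closure_ball_subset_closedBall.trans hsub)).diffContOnCl
    fun z hz ↦ hB z (hsub (sphere_subset_closedBall hz))

theorem norm_cos_le_cosh_im (z : ℂ) : ‖Complex.cos z‖ ≤ Real.cosh z.im := by
  rw [Complex.cos, norm_div, Complex.norm_ofNat, Real.cosh_eq, add_comm (Real.exp _)]
  gcongr
  refine (norm_add_le _ _).trans_eq ?_
  simp [Complex.norm_exp]

theorem half_inv_sq_le_re_inv_sq {w : ℂ} {a : ℝ} (ha : 0 < a) (hw : ‖w - a‖ ≤ a / 8) :
    1 / 2 * a⁻¹ ^ 2 ≤ ((w ^ 2)⁻¹).re := by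
  have hw_ge : 7 / 8 * a ≤ ‖w‖ := by
    have := norm_le_norm_add_norm_sub w (a : ℂ)
    rw [Complex.norm_of_nonneg ha.le] at this
    linarith
  have hw0 : w ≠ 0 := norm_pos_iff.1 (by linarith)
  set u : ℂ := a / w with hu
  have hu_sub : ‖u - 1‖ ≤ 1 / 7 := by
    rw [hu, div_sub_one hw0, norm_div, norm_sub_rev, div_le_iff₀ (by linarith)]
    linarith
  have hu_add : ‖u + 1‖ ≤ 15 / 7 := by
    calc ‖u + 1‖ = ‖(u - 1) + 2‖ := by ring_nf
      _ ≤ ‖u - 1‖ + ‖(2 : ℂ)‖ := norm_add_le _ _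
      _ ≤ 15 / 7 := by rw [Complex.norm_ofNat]; linarith
  have hu_sq : ‖1 - u ^ 2‖ ≤ 1 / 2 := by
    calc ‖1 - u ^ 2‖ = ‖u - 1‖ * ‖u + 1‖ := by rw [norm_sub_rev, ← norm_mul]; ring_nf
      _ ≤ 1 / 7 * (15 / 7) := by gcongr
      _ ≤ 1 / 2 := by norm_num
  have hre : 1 / 2 ≤ (u ^ 2).re := by
    have := (Complex.re_le_norm (1 - u ^ 2)).trans hu_sq
    rw [Complex.sub_re, Complex.one_re] at this
    linarith
  have hinv : (w ^ 2)⁻¹ = (a⁻¹ ^ 2 : ℝ) * u ^ 2 := by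
    have : (a : ℂ) ≠ 0 := by exact_mod_cast ha.ne'
    rw [hu]
    push_cast
    field_simp
  rw [hinv, Complex.re_ofReal_mul, mul_comm]
  gcongr

end Complex

/-- `F` is a holomorphic function on `U ⊆ ℂ` extending the real function `f`, i.e. agreeing with `f`
at the real points of `U`. -/
structure IsHolomorphicExtension (f : ℝ → ℝ) (F : ℂ → ℂ) (U : Set ℂ) : Prop where
  differentiableOn : DifferentiableOn ℂ F U
  eq_ofReal : ∀ x : ℝ, (x : ℂ) ∈ U → F x = f x

namespace IsHolomorphicExtension

variable {f g : ℝ → ℝ} {F G : ℂ → ℂ} {U : Set ℂ}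

protected theorem mul (hf : IsHolomorphicExtension f F U) (hg : IsHolomorphicExtension g G U) :
    IsHolomorphicExtension (fun x ↦ f x * g x) (fun z ↦ F z * G z) U where
  differentiableOn := hf.differentiableOn.mul hg.differentiableOn
  eq_ofReal x hx := by rw [hf.eq_ofReal x hx, hg.eq_ofReal x hx, Complex.ofReal_mul]

theorem const_mul (c : ℝ) (hf : IsHolomorphicExtension f F U) :
    IsHolomorphicExtension (fun x ↦ c * f x) (fun z ↦ c * F z) U where
  differentiableOn := hf.differentiableOn.const_mul _
  eq_ofReal x hx := by rw [hf.eq_ofReal x hx, Complex.ofReal_mul]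

protected theorem cos (hf : IsHolomorphicExtension f F U) :
    IsHolomorphicExtension (fun x ↦ Real.cos (f x)) (fun z ↦ Complex.cos (F z)) U where
  differentiableOn := hf.differentiableOn.ccos
  eq_ofReal x hx := by rw [hf.eq_ofReal x hx, Complex.ofReal_cos]

protected theorem hasDerivAt (hU : IsOpen U) (hf : IsHolomorphicExtension f F U) {x : ℝ}
    (hx : (x : ℂ) ∈ U) : HasDerivAt f (deriv F x).re x := by
  have hF : HasDerivAt (fun y : ℝ ↦ (F y).re) (deriv F x).re x :=
    (hf.differentiableOn.differentiableAt (hU.mem_nhds hx)).hasDerivAt.real_of_complex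
  refine hF.congr_of_eventuallyEq ?_
  filter_upwards [Complex.continuous_ofReal.continuousAt (hU.mem_nhds hx)] with y hy
  rw [hf.eq_ofReal y hy, Complex.ofReal_re]

protected theorem deriv (hU : IsOpen U) (hf : IsHolomorphicExtension f F U) :
    IsHolomorphicExtension (deriv f) (deriv F) U where
  differentiableOn := hf.differentiableOn.deriv hU
  eq_ofReal x hx := by
    have hF := (hf.differentiableOn.differentiableAt (hU.mem_nhds hx)).hasDerivAt.comp_ofReal
    have hf' := (hf.hasDerivAt hU hx).differentiableAt.hasDerivAt.ofReal_comp
    refine (hF.congr_of_eventuallyEq ?_).unique hf'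
    filter_upwards [Complex.continuous_ofReal.continuousAt (hU.mem_nhds hx)] with y hy
    exact (hf.eq_ofReal y hy).symm

protected theorem iteratedDeriv (hU : IsOpen U) (hf : IsHolomorphicExtension f F U) (n : ℕ) :
    IsHolomorphicExtension (iteratedDeriv n f) (iteratedDeriv n F) U := by
  induction n with
  | zero => simpa only [iteratedDeriv_zero] using hf
  | succ n ih => simpa only [iteratedDeriv_succ] using ih.deriv hU

variable {x r B : ℝ}

theorem abs_iteratedDeriv_le (hf : IsHolomorphicExtension f F (ball (x : ℂ) r)) (hr : 0 < r)
    (hB : ∀ z ∈ ball (x : ℂ) r, ‖F z‖ ≤ B) (n : ℕ) :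
    |iteratedDeriv n f x| ≤ n.factorial * B / r ^ n := by
  rw [← Real.norm_eq_abs, ← Complex.norm_real,
    ← (hf.iteratedDeriv isOpen_ball n).eq_ofReal x (mem_ball_self hr)]
  exact norm_iteratedDeriv_le_of_forall_mem_ball_norm_le n hr hf.differentiableOn hB

theorem exists_primitive (hf : IsHolomorphicExtension f F (ball (x : ℂ) r)) (hr : 0 < r)
    (hg : ∀ y, HasDerivAt g (f y) y) :
    ∃ G, IsHolomorphicExtension g G (ball (x : ℂ) r) ∧
      ∀ z ∈ ball (x : ℂ) r, HasDerivAt G (F z) z := by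
  obtain ⟨G, hGx, hG⟩ := hf.differentiableOn.isExactOn_ball.with_val_at (x : ℂ) (g x : ℂ)
  refine ⟨G, ⟨fun z hz ↦ (hG z hz).differentiableAt.differentiableWithinAt, fun y hy ↦ ?_⟩, hG⟩
  have hball : Complex.ofReal ⁻¹' ball (x : ℂ) r = ball x r :=
    Complex.isometry_ofReal.preimage_ball x r
  have hG' : ∀ t ∈ ball x r, HasDerivAt (fun s : ℝ ↦ G s) (F t) t :=
    fun t ht ↦ (hG t (hball.ge ht)).comp_ofReal
  have hg' (t : ℝ) : HasDerivAt (fun s : ℝ ↦ (g s : ℂ)) (f t) t := (hg t).ofReal_comp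
  exact isOpen_ball.eqOn_of_deriv_eq (convex_ball x r).isPreconnected
    (fun t ht ↦ (hG' t ht).differentiableAt.differentiableWithinAt)
    (fun t _ ↦ (hg' t).differentiableAt.differentiableWithinAt)
    (fun t ht ↦ by rw [(hG' t ht).deriv, (hg' t).deriv, hf.eq_ofReal t (hball.ge ht)])
    (mem_ball_self hr) hGx (hball.le hy)

theorem exists_cos_primitive (hf : IsHolomorphicExtension f F (ball (x : ℂ) r)) (hr : 0 < r)
    (hB : ∀ z ∈ ball (x : ℂ) r, ‖F z‖ ≤ B) (hg : ∀ y, HasDerivAt g (f y) y) :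
    ∃ G, IsHolomorphicExtension (fun y ↦ Real.cos (g y)) G (ball (x : ℂ) r) ∧
      ∀ z ∈ ball (x : ℂ) r, ‖G z‖ ≤ Real.cosh (B * r) := by
  obtain ⟨G, hgG, hG⟩ := hf.exists_primitive hr hg
  refine ⟨_, hgG.cos, fun z hz ↦ (norm_cos_le_cosh_im _).trans (Real.cosh_le_cosh.2 ?_)⟩
  have hx : (x : ℂ) ∈ ball (x : ℂ) r := mem_ball_self hr
  have hB0 : 0 ≤ B := (norm_nonneg _).trans (hB x hx)
  have him : (G z).im = (G z - G x).im := by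
    rw [Complex.sub_im, hgG.eq_ofReal x hx, Complex.ofReal_im, sub_zero]
  calc |(G z).im| ≤ ‖G z - G x‖ := him ▸ Complex.abs_im_le_norm _
    _ ≤ B * ‖z - x‖ := (convex_ball _ _).norm_image_sub_le_of_norm_hasDerivWithin_le
        (fun w hw ↦ (hG w hw).hasDerivWithinAt) hB hx hz
    _ ≤ B * r := by gcongr; exact (mem_ball_iff_norm.1 hz).le
    _ ≤ |B * r| := le_abs_self _

end IsHolomorphicExtension

theorem pow_mul_exp_neg_mul_rpow_le {u b p : ℝ} (hu : 0 ≤ u) (hb : 0 < b) (hp : 0 < p) (k : ℕ) :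
    u ^ k * Real.exp (-(b * u ^ p)) ≤
      ((b * p) ^ (-(1 / p))) ^ k * (k.factorial : ℝ) ^ (1 / p) := by
  have hbp : 0 < b * p := mul_pos hb hp
  -- The Taylor bound `tᵏ ≤ k! eᵗ` at `t = b p uᵖ`, to be raised to the power `1 / p`.
  have htaylor : (b * p * u ^ p) ^ k * Real.exp (-(b * p * u ^ p)) ≤ k.factorial := by
    have := Real.pow_div_factorial_le_exp (b * p * u ^ p) (by positivity) k
    rw [div_le_iff₀ (by positivity)] at this
    rwa [Real.exp_neg, ← div_eq_mul_inv, div_le_iff₀ (Real.exp_pos _), mul_comm (k.factorial : ℝ)]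
  have hbase : (b * p * u ^ p) ^ (1 / p) = (b * p) ^ (1 / p) * u := by
    rw [Real.mul_rpow hbp.le (by positivity), ← Real.rpow_mul hu, mul_one_div_cancel hp.ne',
      Real.rpow_one]
  have hroot : ((b * p) ^ (1 / p)) ^ k * (u ^ k * Real.exp (-(b * u ^ p))) =
      ((b * p * u ^ p) ^ k * Real.exp (-(b * p * u ^ p))) ^ (1 / p) := by
    rw [Real.mul_rpow (y := Real.exp _) (by positivity) (by positivity), ← Real.exp_mul,
      ← Real.rpow_pow_comm (by positivity), hbase, mul_pow, mul_assoc]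
    congr 3
    field_simp
  rw [Real.rpow_neg hbp.le, inv_pow, ← div_eq_inv_mul, le_div_iff₀' (by positivity), hroot]
  gcongr

theorem IsHolomorphicExtension.abs_iteratedDeriv_le_mul_pow {f : ℝ → ℝ} {F : ℂ → ℂ}
    {x δ ε b p C : ℝ} (hf : IsHolomorphicExtension f F (ball (x : ℂ) (ε * δ)))
    (hδ : 0 < δ) (hε : 0 < ε) (hb : 0 < b) (hp : 0 < p)
    (hC : ∀ z ∈ ball (x : ℂ) (ε * δ), ‖F z‖ ≤ C * Real.exp (-(b * δ⁻¹ ^ p))) (n m : ℕ) :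
    |iteratedDeriv n f x| ≤ C * ε⁻¹ ^ n * n.factorial *
      (((b * p) ^ (-(1 / p))) ^ (n + m) * ((n + m).factorial : ℝ) ^ (1 / p)) * δ ^ m := by
  have hC0 : 0 ≤ C := nonneg_of_mul_nonneg_left
    ((norm_nonneg _).trans (hC x (mem_ball_self (mul_pos hε hδ)))) (Real.exp_pos _)
  calc |iteratedDeriv n f x|
      ≤ n.factorial * (C * Real.exp (-(b * δ⁻¹ ^ p))) / (ε * δ) ^ n :=
        hf.abs_iteratedDeriv_le (mul_pos hε hδ) hC n
    _ = C * ε⁻¹ ^ n * n.factorial * (δ⁻¹ ^ (n + m) * Real.exp (-(b * δ⁻¹ ^ p))) * δ ^ m := by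
      rw [mul_pow, pow_add, inv_pow, inv_pow, inv_pow]
      field_simp
    _ ≤ _ := by
      gcongr C * ε⁻¹ ^ n * n.factorial * ?_ * δ ^ m
      exact pow_mul_exp_neg_mul_rpow_le (inv_nonneg.2 hδ.le) hb hp (n + m)

/-- The Gevrey class `G^r_0(C, R)`: smooth functions with `‖f⁽ᵏ⁾‖_∞ ≤ C Rᵏ (k!)ʳ` for all `k`. -/
def IsGevrey (r C R : ℝ) (f : ℝ → ℝ) : Prop :=
  ContDiff ℝ (⊤ : ℕ∞) f ∧
    ∀ (k : ℕ) (x : ℝ), |iteratedDeriv k f x| ≤ C * R ^ k * (k.factorial : ℝ) ^ r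

namespace IsGevrey

variable {f g : ℝ → ℝ} {r C R : ℝ}

theorem mono_radius {R' : ℝ} (hf : IsGevrey r C R f) (hC : 0 ≤ C) (hR : 0 ≤ R) (h : R ≤ R') :
    IsGevrey r C R' f :=
  ⟨hf.1, fun k x ↦ (hf.2 k x).trans (by gcongr)⟩

theorem of_hasDerivAt {B : ℝ} (hf : IsGevrey r C R f) (hg : ∀ x, HasDerivAt g (f x) x)
    (hB : ∀ x, |g x| ≤ B) (hr : 0 ≤ r) (hR : 0 ≤ R) (hC : C ≤ B * R) : IsGevrey r B R g := by
  have hderiv : deriv g = f := funext fun x ↦ (hg x).deriv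
  refine ⟨contDiff_infty_iff_deriv.2 ⟨fun x ↦ (hg x).differentiableAt, hderiv ▸ hf.1⟩,
    fun k x ↦ ?_⟩
  cases k with
  | zero => simpa using hB x
  | succ k =>
    have hB0 : 0 ≤ B := (abs_nonneg _).trans (hB x)
    calc |iteratedDeriv (k + 1) g x| = |iteratedDeriv k f x| := by rw [iteratedDeriv_succ', hderiv]
      _ ≤ C * R ^ k * (k.factorial : ℝ) ^ r := hf.2 k x
      _ ≤ B * R * R ^ k * ((k + 1).factorial : ℝ) ^ r := by
        gcongr
        exact k.le_succ
      _ = B * R ^ (k + 1) * ((k + 1).factorial : ℝ) ^ r := by ring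

theorem of_isHolomorphicExtension {ρ : ℝ → ℝ} {ε b p : ℝ} (hρ : Differentiable ℝ ρ)
    (hf : ∀ x, ρ x ≤ 0 → f x = 0) (hC : 0 ≤ C) (hε : 0 < ε) (hb : 0 < b) (hp : 0 < p)
    (hext : ∀ x, 0 < ρ x → ∃ F, IsHolomorphicExtension f F (ball (x : ℂ) (ε * ρ x)) ∧
      ∀ z ∈ ball (x : ℂ) (ε * ρ x), ‖F z‖ ≤ C * Real.exp (-(b * (ρ x)⁻¹ ^ p))) :
    IsGevrey (1 + 1 / p) C (ε⁻¹ * (b * p) ^ (-(1 / p))) f := by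
  have hflat (k : ℕ) : ∃ M, ∀ x, 0 < ρ x → ‖iteratedDeriv k f x‖ ≤ M * ρ x ^ 2 :=
    ⟨_, fun x hx ↦
      let ⟨_, hF, hFC⟩ := hext x hx
      hF.abs_iteratedDeriv_le_mul_pow hx hε hb hp hFC k 2⟩
  refine ⟨contDiff_of_norm_iteratedDeriv_le_sq hρ hf (fun k x hx ↦ ?_) hflat, fun k x ↦ ?_⟩
  · obtain ⟨F, hF, -⟩ := hext x hx
    exact ((hF.iteratedDeriv isOpen_ball k).hasDerivAt isOpen_ball
      (mem_ball_self (mul_pos hε hx))).differentiableAt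
  · rcases le_or_gt (ρ x) 0 with hx | hx
    · rw [iteratedDeriv_eq_zero_of_norm_le_sq hρ hf hflat k x hx, abs_zero]
      positivity
    · obtain ⟨F, hF, hFC⟩ := hext x hx
      refine (hF.abs_iteratedDeriv_le_mul_pow hx hε hb hp hFC k 0).trans_eq ?_
      rw [mul_pow, Real.rpow_add (by positivity), Real.rpow_one, add_zero, pow_zero]
      ring

end IsGevrey

theorem hasDerivAt_integral_Iic {E : Type*} [NormedAddCommGroup E] [NormedSpace ℝ E]
    [CompleteSpace E] {f : ℝ → E} (hf : Continuous f) (hfi : Integrable f) (x : ℝ) :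
    HasDerivAt (fun x ↦ ∫ y in Set.Iic x, f y) (f x) x := by
  have heq (x : ℝ) : ∫ y in Set.Iic x, f y = (∫ y in Set.Iic 0, f y) + ∫ y in (0)..x, f y := by
    rw [← intervalIntegral.integral_Iic_sub_Iic hfi.integrableOn hfi.integrableOn,
      add_sub_cancel]
  rw [funext heq]
  exact (hf.integral_hasStrictDerivAt 0 x).hasDerivAt.const_add _

section Bump

theorem vFun_of_pos {x : ℝ} (hx : 0 < 1 - x ^ 2) :
    vFun x = Real.exp (-((1 - x ^ 2) ^ 2)⁻¹) :=
  if_pos (abs_lt.1 ((sq_lt_one_iff_abs_lt_one x).1 (sub_pos.1 hx)))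

theorem vFun_of_nonpos {x : ℝ} (hx : 1 - x ^ 2 ≤ 0) : vFun x = 0 :=
  if_neg fun h ↦ hx.not_gt (sub_pos.2 ((sq_lt_one_iff_abs_lt_one x).2 (abs_lt.2 h)))

theorem vFun_nonneg (x : ℝ) : 0 ≤ vFun x := by
  unfold vFun
  positivity

/-- The holomorphic function `exp(-(1-z²)^{-2})` on `ℂ ∖ {±1}`, which extends `vFun` from the
interval `(-1,1)`. -/
noncomputable def complexBump (z : ℂ) : ℂ := Complex.exp (-((1 - z ^ 2) ^ 2)⁻¹)

variable {x : ℝ} {z : ℂ}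

theorem norm_one_sub_sq_sub_le (hz : ‖z - x‖ ≤ 1 - x ^ 2) :
    ‖1 - z ^ 2 - (1 - x ^ 2 : ℝ)‖ ≤ 2 * ‖z - x‖ := by
  have hfactor : 1 - z ^ 2 - (1 - x ^ 2 : ℝ) = -((2 * x + (z - x)) * (z - x)) := by
    push_cast
    ring
  rw [hfactor, norm_neg, norm_mul]
  gcongr
  calc ‖2 * (x : ℂ) + (z - x)‖ ≤ 2 * |x| + ‖z - x‖ := by
        simpa using norm_add_le (2 * (x : ℂ)) (z - x)
    _ ≤ 2 := by nlinarith [sq_nonneg (1 - |x|), sq_abs x]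

theorem norm_one_sub_sq_sub_le_of_mem_ball (hz : z ∈ ball (x : ℂ) (1 / 16 * (1 - x ^ 2))) :
    ‖1 - z ^ 2 - (1 - x ^ 2 : ℝ)‖ ≤ (1 - x ^ 2) / 8 := by
  rw [mem_ball_iff_norm] at hz
  have := norm_nonneg (z - x)
  have := norm_one_sub_sq_sub_le (x := x) (z := z) (by linarith)
  linarith

theorem isHolomorphicExtension_complexBump (hx : 0 < 1 - x ^ 2) :
    IsHolomorphicExtension vFun complexBump (ball (x : ℂ) (1 / 16 * (1 - x ^ 2))) where
  differentiableOn z hz := by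
    have hne : (1 - z ^ 2) ^ 2 ≠ 0 := by
      refine pow_ne_zero 2 fun h ↦ ?_
      have := norm_one_sub_sq_sub_le_of_mem_ball hz
      rw [h, zero_sub, norm_neg, Complex.norm_of_nonneg hx.le] at this
      linarith
    unfold complexBump
    fun_prop (disch := assumption)
  eq_ofReal y hy := by
    have := norm_one_sub_sq_sub_le_of_mem_ball hy
    norm_cast at this
    rw [Real.norm_eq_abs, abs_le] at this
    rw [vFun_of_pos (by linarith), complexBump]
    push_cast
    rfl

theorem norm_complexBump_le (hx : 0 < 1 - x ^ 2) (hz : z ∈ ball (x : ℂ) (1 / 16 * (1 - x ^ 2))) :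
    ‖complexBump z‖ ≤ Real.exp (-(1 / 2 * (1 - x ^ 2)⁻¹ ^ (2 : ℝ))) := by
  rw [complexBump, Complex.norm_exp, Complex.neg_re, Real.rpow_two]
  gcongr
  exact half_inv_sq_le_re_inv_sq hx (norm_one_sub_sq_sub_le_of_mem_ball hz)

theorem isGevrey_three_halves_of_isHolomorphicExtension {f : ℝ → ℝ} {C : ℝ} (hC : 0 ≤ C)
    (hf : ∀ x, 1 - x ^ 2 ≤ 0 → f x = 0)
    (hext : ∀ x : ℝ, 0 < 1 - x ^ 2 →
      ∃ F, IsHolomorphicExtension f F (ball (x : ℂ) (1 / 16 * (1 - x ^ 2))) ∧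
        ∀ z ∈ ball (x : ℂ) (1 / 16 * (1 - x ^ 2)),
          ‖F z‖ ≤ C * Real.exp (-(1 / 2 * (1 - x ^ 2)⁻¹ ^ (2 : ℝ)))) :
    IsGevrey (3 / 2) C 16 f := by
  convert IsGevrey.of_isHolomorphicExtension (ρ := fun x ↦ 1 - x ^ 2) (ε := 1 / 16) (b := 1 / 2)
    (p := 2) (by fun_prop) hf hC (by norm_num) (by norm_num) (by norm_num) hext using 1 <;> norm_num

theorem isGevrey_vFun : IsGevrey (3 / 2) 1 16 vFun :=
  isGevrey_three_halves_of_isHolomorphicExtension zero_le_one (fun _ ↦ vFun_of_nonpos) fun _ hx ↦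
    ⟨complexBump, isHolomorphicExtension_complexBump hx, fun _ hz ↦ by
      simpa only [one_mul] using norm_complexBump_le hx hz⟩

theorem continuous_vFun : Continuous vFun := isGevrey_vFun.1.continuous

theorem integrable_vFun : Integrable vFun := by
  refine continuous_vFun.integrable_of_hasCompactSupport
    (HasCompactSupport.intro (isCompact_Icc (a := -1) (b := 1)) fun x hx ↦ ?_)
  exact if_neg fun h ↦ hx (Set.Ioo_subset_Icc_self h)

theorem exp_neg_two_le_integral_vFun : Real.exp (-2) ≤ ∫ x, vFun x := by
  have hle : ∀ x ∈ Set.Icc (-(1 / 2) : ℝ) (1 / 2), Real.exp (-2) ≤ vFun x := by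
    intro x hx
    have hx_ge : 3 / 4 ≤ 1 - x ^ 2 := by nlinarith [hx.1, hx.2]
    rw [vFun_of_pos (by linarith), Real.exp_le_exp, neg_le_neg_iff]
    exact inv_le_of_inv_le₀ two_pos (by nlinarith)
  calc Real.exp (-2) = ∫ _ in Set.Icc (-(1 / 2) : ℝ) (1 / 2), Real.exp (-2) := by
        rw [setIntegral_const, Real.volume_real_Icc]
        norm_num
    _ ≤ ∫ x in Set.Icc (-(1 / 2) : ℝ) (1 / 2), vFun x :=
      setIntegral_mono_on (by simp) integrable_vFun.integrableOn measurableSet_Icc hle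
    _ ≤ ∫ x, vFun x := setIntegral_le_integral integrable_vFun (.of_forall vFun_nonneg)

/-- The normalizing factor `(π/2)(∫v)⁻¹` in the definition of `psiFun`. -/
noncomputable def psiFactor : ℝ := π / 2 * (∫ x, vFun x)⁻¹

theorem psiFactor_nonneg : 0 ≤ psiFactor :=
  mul_nonneg (by positivity) (inv_nonneg.2 (integral_nonneg fun x ↦ vFun_nonneg x))

theorem psiFactor_le : psiFactor ≤ 12 := by
  have hexp : Real.exp 2 ≤ 7.5 := by
    have := Real.exp_one_lt_d9
    calc Real.exp 2 = Real.exp 1 ^ 2 := by rw [← Real.exp_nat_mul]; norm_num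
      _ ≤ 2.72 ^ 2 := by gcongr; linarith
      _ ≤ 7.5 := by norm_num
  have hinv : (∫ x, vFun x)⁻¹ ≤ 7.5 := by
    refine (inv_anti₀ (Real.exp_pos _) exp_neg_two_le_integral_vFun).trans ?_
    rwa [← Real.exp_neg, neg_neg]
  calc psiFactor ≤ 3.15 / 2 * 7.5 := by
        unfold psiFactor
        gcongr
        exacts [inv_nonneg.2 (integral_nonneg fun x ↦ vFun_nonneg x), Real.pi_lt_d2.le]
    _ ≤ 12 := by norm_num

theorem isHolomorphicExtension_psiFun (hx : 0 < 1 - x ^ 2) :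
    IsHolomorphicExtension psiFun (fun z ↦ psiFactor * complexBump z)
      (ball (x : ℂ) (1 / 16 * (1 - x ^ 2))) :=
  (isHolomorphicExtension_complexBump hx).const_mul _

theorem norm_psiFactor_mul_complexBump_le (hx : 0 < 1 - x ^ 2)
    (hz : z ∈ ball (x : ℂ) (1 / 16 * (1 - x ^ 2))) :
    ‖psiFactor * complexBump z‖ ≤
      12 * Real.exp (-(1 / 2 * (1 - x ^ 2)⁻¹ ^ (2 : ℝ))) := by
  rw [norm_mul, Complex.norm_of_nonneg psiFactor_nonneg]
  gcongr
  exacts [psiFactor_le, norm_complexBump_le hx hz]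

end Bump

theorem hasDerivAt_thetaFun (x : ℝ) : HasDerivAt thetaFun (psiFun x) x :=
  hasDerivAt_integral_Iic (continuous_vFun.const_mul _) (integrable_vFun.const_mul _) x

theorem cosh_three_quarters_le : Real.cosh (3 / 4) ≤ 4 / 3 := by
  have hexp : 3 / 4 ≤ Real.exp (-((3 / 4) ^ 2 / 2)) :=
    le_trans (by norm_num) (Real.one_sub_div_pow_le_exp_neg (n := 8) (by norm_num))
  calc Real.cosh (3 / 4) ≤ Real.exp ((3 / 4) ^ 2 / 2) := Real.cosh_le_exp_half_sq _
    _ ≤ 4 / 3 := by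
      rw [Real.exp_neg] at hexp
      exact (le_inv_comm₀ (by norm_num) (Real.exp_pos _)).1 hexp |>.trans_eq (by norm_num)

theorem isGevrey_cos_thetaFun_mul_psiFun :
    IsGevrey (3 / 2) 16 16 fun x ↦ Real.cos (thetaFun x) * psiFun x := by
  refine isGevrey_three_halves_of_isHolomorphicExtension (by norm_num)
    (fun x hx ↦ by rw [psiFun, vFun_of_nonpos hx, mul_zero, mul_zero]) fun x hx ↦ ?_
  have hψ := isHolomorphicExtension_psiFun hx
  have hψ_le (z : ℂ) (hz : z ∈ ball (x : ℂ) (1 / 16 * (1 - x ^ 2))) :=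
    norm_psiFactor_mul_complexBump_le hx hz
  obtain ⟨G, hG, hG_le⟩ := hψ.exists_cos_primitive (B := 12) (by positivity)
    (fun z hz ↦ (hψ_le z hz).trans (mul_le_of_le_one_right (by norm_num)
      (Real.exp_le_one_iff.2 (neg_nonpos.2 (by positivity)))))
    hasDerivAt_thetaFun
  have hcosh : Real.cosh (12 * (1 / 16 * (1 - x ^ 2))) ≤ 4 / 3 := by
    refine (Real.cosh_le_cosh.2 ?_).trans cosh_three_quarters_le
    rw [abs_of_nonneg (by positivity), abs_of_nonneg (by norm_num)]
    nlinarith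
  refine ⟨_, hG.mul hψ, fun z hz ↦ ?_⟩
  rw [norm_mul]
  calc ‖G z‖ * ‖psiFactor * complexBump z‖
      ≤ 4 / 3 * (12 * Real.exp (-(1 / 2 * (1 - x ^ 2)⁻¹ ^ (2 : ℝ)))) := by
        gcongr
        exacts [(hG_le z hz).trans hcosh, hψ_le z hz]
    _ = 16 * Real.exp (-(1 / 2 * (1 - x ^ 2)⁻¹ ^ (2 : ℝ))) := by ring

theorem isGevrey_sFun : IsGevrey (3 / 2) 1 16 sFun :=
  isGevrey_cos_thetaFun_mul_psiFun.of_hasDerivAt (fun x ↦ (hasDerivAt_thetaFun x).sin)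
    (fun _ ↦ Real.abs_sin_le_one _) (by norm_num) (by norm_num) (by norm_num)

theorem sixteen_le_gevrey_radius : 16 ≤ (2 + 3 * √2) * (1 + π / 2) := by
  have hsqrt : 1.414 ≤ √2 := Real.le_sqrt_of_sq_le (by norm_num)
  nlinarith [Real.pi_gt_d2]

/-- **The modified Heaviside function `s` is Gevrey of class
`G^{3/2}_0(1, (2+3√2)(1+π/2))`:** `s` is `C^∞` and
`‖s^(k)‖_∞ ≤ ((2+3√2)(1+π/2))^k (k!)^{3/2}` for all `k ≥ 0`. -/
theorem stmt19 :
    ContDiff ℝ (⊤ : ℕ∞) sFun ∧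
    ∀ k : ℕ, ∀ x : ℝ,
      |iteratedDeriv k sFun x|
        ≤ ((2 + 3 * Real.sqrt 2) * (1 + Real.pi / 2)) ^ k *
            (Nat.factorial k : ℝ) ^ ((3 : ℝ) / 2) := by
  simpa only [IsGevrey, one_mul] using
    isGevrey_sFun.mono_radius zero_le_one (by norm_num) sixteen_le_gevrey_radius
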